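/- Every unsatisfiable weakly linear k-CNF formula (k ≥ 1) has more than C(f_occ(k−1)+2, 2) clauses; in particular, since f_occ(k−1) ≥ 2^{k-1}/(e(k−1)) − 1, every weakly linear k-CNF formula with at most 4^k/(8 e^2 (k−1)^2) clauses is satisfiable (for k ≥ 2). -/

import Mathlib

abbrev Var := ℕ
abbrev Lit := Var × Bool
abbrev Clause := Finset Lit
abbrev CNF := Finset Clause

/-- A clause is valid if it does not contain a variable together with its negation. -/
def Clause.valid (C : Clause) : Prop := ∀ x : Var, ¬(((x, true) ∈ C) ∧ ((x, false) ∈ C))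

/-- The set of variables of a clause. -/
def vbl (C : Clause) : Finset Var := C.image Prod.fst

/-- A `k`-CNF formula: every clause is valid and has exactly `k` literals. -/
def IsKCNF (k : ℕ) (F : CNF) : Prop := ∀ C ∈ F, Clause.valid C ∧ C.card = k

/-- A CNF formula is linear if any two distinct clauses share at most one variable. -/
def LinearCNF (F : CNF) : Prop := ∀ C ∈ F, ∀ D ∈ F, C ≠ D → (vbl C ∩ vbl D).card ≤ 1

/-- A CNF formula is weakly linear if any two distinct clauses share at most one literal. -/
def WeaklyLinear (F : CNF) : Prop := ∀ C ∈ F, ∀ D ∈ F, C ≠ D → (C ∩ D).card ≤ 1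

/-- An assignment satisfies a formula if every clause contains a true literal. -/
def Satisfies (α : Var → Bool) (F : CNF) : Prop := ∀ C ∈ F, ∃ l ∈ C, α l.1 = l.2

def Unsat (F : CNF) : Prop := ¬ ∃ α, Satisfies α F
/-- The number of clauses of `F` containing the literal `u`. -/
def occCount (F : CNF) (u : Lit) : ℕ := (F.filter (fun C => u ∈ C)).card

/-- `focc j` is the largest `d` such that every `j`-CNF formula in which every
literal occurs in at most `d` clauses is satisfiable. -/
noncomputable def focc (j : ℕ) : ℕ :=
  sSup {d : ℕ | ∀ F : CNF, IsKCNF j F → (∀ u : Lit, occCount F u ≤ d) → ∃ α, Satisfies α F}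


/-- The defining property of the numbers over which `focc` takes a supremum. -/
def GoodOcc (j d : ℕ) : Prop :=
  ∀ F : CNF, IsKCNF j F → (∀ u : Lit, occCount F u ≤ d) → ∃ α, Satisfies α F

theorem goodOcc_zero {j : ℕ} (hj : 1 ≤ j) : GoodOcc j 0 := by
  intro F hF ho
  refine ⟨fun _ => true, ?_⟩
  intro C hC
  exfalso
  have h1 := (hF C hC).2
  have : C.Nonempty := by
    rw [← Finset.card_pos]; omega
  obtain ⟨u, hu⟩ := this
  have h2 := ho u
  have h3 : 0 < occCount F u := by
    unfold occCount
    exact Finset.card_pos.mpr ⟨C, by simp [hC, hu]⟩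
  omega

theorem goodOcc_focc {j : ℕ} (hj : 1 ≤ j) : GoodOcc j (focc j) := by
  by_cases hb : BddAbove {d : ℕ | GoodOcc j d}
  · exact Nat.sSup_mem ⟨0, goodOcc_zero hj⟩ hb
  · have : focc j = 0 := Nat.sSup_of_not_bddAbove hb
    rw [this]
    exact goodOcc_zero hj

theorem focc_zero : focc 0 = 0 := by
  have : {d : ℕ | GoodOcc 0 d} = ∅ := by
    ext d
    simp only [Set.mem_ofPred_eq, Set.mem_empty_iff_false, iff_false]
    intro h
    obtain ⟨α, hα⟩ := h {∅} (by intro C hC; simp at hC; subst hC; simp [Clause.valid])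
      (by intro u; simp [occCount, Finset.filter_singleton])
    obtain ⟨l, hl, _⟩ := hα ∅ (by simp)
    simp at hl
  show sSup {d : ℕ | GoodOcc 0 d} = 0
  rw [this]; simp

/-- An unsatisfiable formula without empty clauses has at least two clauses. -/
theorem two_le_card {k : ℕ} {F : CNF} (hk : 1 ≤ k) (hF : IsKCNF k F) (hu : Unsat F) :
    1 < F.card := by
  by_contra hcon
  apply hu
  have hle : F.card ≤ 1 := by omega
  rw [Finset.card_le_one] at hle
  by_cases hne : F.Nonempty
  · obtain ⟨C, hC⟩ := hne
    have h1 := (hF C hC).2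
    have : C.Nonempty := by
      rw [← Finset.card_pos]; omega
    obtain ⟨u, hu⟩ := this
    refine ⟨fun _ => u.2, ?_⟩
    intro D hD
    rw [hle D hD C hC]
    exact ⟨u, hu, rfl⟩
  · rw [Finset.not_nonempty_iff_eq_empty] at hne
    subst hne
    exact ⟨fun _ => true, by intro C hC; simp at hC⟩

/-- Removing one literal per clause. -/
theorem sat_of_removal {j d : ℕ} {F : CNF} (hd : GoodOcc j d) (hF : IsKCNF (j + 1) F)
    (r : Clause → Lit) (hr : ∀ C ∈ F, r C ∈ C)
    (hocc : ∀ u, (F.filter (fun C => u ∈ C ∧ r C ≠ u)).card ≤ d) : ∃ α, Satisfies α F := by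
  obtain ⟨α, hα⟩ := hd (F.image (fun C => C.erase (r C))) (by
    intro D hD
    obtain ⟨C, hC, rfl⟩ := Finset.mem_image.mp hD
    refine ⟨?_, ?_⟩
    · intro x hx
      exact (hF C hC).1 x ⟨Finset.mem_of_mem_erase hx.1, Finset.mem_of_mem_erase hx.2⟩
    · rw [Finset.card_erase_of_mem (hr C hC), (hF C hC).2]; rfl) (by
    intro u
    refine le_trans ?_ (hocc u)
    unfold occCount
    refine le_trans (Finset.card_le_card ?_)
      (Finset.card_image_le (f := fun C : Clause => C.erase (r C)))
    intro D hD
    rw [Finset.mem_filter, Finset.mem_image] at hD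
    obtain ⟨⟨C, hC, rfl⟩, hu⟩ := hD
    rw [Finset.mem_image]
    refine ⟨C, ?_, rfl⟩
    rw [Finset.mem_filter]
    rw [Finset.mem_erase] at hu
    exact ⟨hC, hu.2, fun h => hu.1 h.symm⟩)
  refine ⟨α, ?_⟩
  intro C hC
  obtain ⟨l, hl, h⟩ := hα _ (Finset.mem_image_of_mem _ hC)
  exact ⟨l, Finset.mem_of_mem_erase hl, h⟩

/-- Consequence of Hall's theorem. -/
theorem exists_deficient {j d : ℕ} {F : CNF} (hd : GoodOcc j d) (hF : IsKCNF (j + 1) F)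
    (hu : Unsat F) : ∃ A : Finset Lit, (∀ u ∈ A, d + 1 ≤ occCount F u) ∧
      (F.filter (fun C => ∃ u ∈ A, u ∈ C)).card + A.card * d < ∑ u ∈ A, occCount F u := by
  classical
  let ι := {p : Lit × ℕ // p.2 + d < occCount F p.1}
  let t : ι → Finset Clause := fun p => F.filter (fun C => p.1.1 ∈ C)
  by_cases hall : ∀ s : Finset ι, s.card ≤ (s.biUnion t).card
  · exfalso
    rw [Finset.all_card_le_biUnion_card_iff_exists_injective] at hall
    obtain ⟨f, hinj, hf⟩ := hall
    apply hu
    have hne : ∀ C : Clause, C ∈ F → ∃ u, u ∈ C := by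
      intro C hC
      have h1 := (hF C hC).2
      have : C.Nonempty := by
        rw [← Finset.card_pos]; omega
      exact this
    have hex : ∀ C : Clause, ∃ u : Lit, (C ∈ F → u ∈ C) ∧ ∀ p : ι, f p = C → p.1.1 = u := by
      intro C
      by_cases hp : ∃ p, f p = C
      · obtain ⟨p, rfl⟩ := hp
        refine ⟨p.1.1, fun _ => (Finset.mem_filter.mp (hf p)).2, ?_⟩
        intro q hq
        rw [hinj hq]
      · by_cases hC : C ∈ F
        · obtain ⟨u, hu⟩ := hne C hC
          exact ⟨u, fun _ => hu, fun p h => absurd ⟨p, h⟩ hp⟩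
        · exact ⟨(0, true), fun h => absurd h hC, fun p h => absurd ⟨p, h⟩ hp⟩
    choose r hr hr' using hex
    refine sat_of_removal hd hF r hr ?_
    intro u
    have hsplit := Finset.card_filter_add_card_filter_not (s := F.filter (fun C => u ∈ C))
      (fun C => r C = u)
    rw [Finset.filter_filter, Finset.filter_filter] at hsplit
    have hm : (F.filter (fun C => u ∈ C)).card = occCount F u := rfl
    rw [hm] at hsplit
    have hlow : occCount F u - d ≤ (F.filter (fun C => u ∈ C ∧ r C = u)).card := by
      let g : Fin (occCount F u - d) → Clause := fun i => f ⟨(u, i.1), by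
        have := i.2
        show i.1 + d < occCount F u
        omega⟩
      have hg : Function.Injective g := by
        intro a b hab
        exact Fin.ext (congrArg (fun p : ι => p.1.2) (hinj hab))
      calc occCount F u - d = (Finset.univ.image g).card := by
            rw [Finset.card_image_of_injective _ hg]; simp
        _ ≤ _ := by
          apply Finset.card_le_card
          intro C hC
          obtain ⟨i, _, rfl⟩ := Finset.mem_image.mp hC
          have h1 := Finset.mem_filter.mp (hf ⟨(u, i.1), by
            have := i.2
            show i.1 + d < occCount F u
            omega⟩)
          rw [Finset.mem_filter]
          exact ⟨h1.1, h1.2, (hr' _ _ rfl).symm⟩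
    simp only [ne_eq]
    omega
  · push Not at hall
    obtain ⟨s, hs⟩ := hall
    refine ⟨s.image (fun p => p.1.1), ?_, ?_⟩
    · intro u hu
      obtain ⟨p, _, rfl⟩ := Finset.mem_image.mp hu
      have := p.2
      omega
    · have hN : F.filter (fun C => ∃ u ∈ s.image (fun p => p.1.1), u ∈ C) = s.biUnion t := by
        ext C
        simp only [Finset.mem_filter, Finset.mem_biUnion, t, Finset.mem_image]
        constructor
        · rintro ⟨hC, u, ⟨p, hp, rfl⟩, hu⟩
          exact ⟨p, hp, hC, hu⟩
        · rintro ⟨p, hp, hC, hu⟩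
          exact ⟨hC, _, ⟨p, hp, rfl⟩, hu⟩
      rw [hN]
      have hfib : ∀ u ∈ s.image (fun p => p.1.1),
          (s.filter (fun p => p.1.1 = u)).card + d ≤ occCount F u := by
        intro u hu
        obtain ⟨p, _, rfl⟩ := Finset.mem_image.mp hu
        have hp := p.2
        have : (s.filter (fun q => q.1.1 = p.1.1)).card
            ≤ (Finset.range (occCount F p.1.1 - d)).card := by
          apply Finset.card_le_card_of_injOn (fun q => q.1.2)
          · intro q hq
            have hq' := (Finset.mem_filter.mp hq).2
            have := q.2
            rw [hq'] at this
            simp only [Finset.coe_range, Set.mem_Iio]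
            omega
          · intro q hq q' hq' h
            have h1 := (Finset.mem_filter.mp hq).2
            have h2 := (Finset.mem_filter.mp hq').2
            exact Subtype.ext (Prod.ext (h1.trans h2.symm) h)
        rw [Finset.card_range] at this
        omega
      have hsum := Finset.sum_le_sum hfib
      rw [Finset.sum_add_distrib, ← Finset.card_eq_sum_card_image, Finset.sum_const,
        smul_eq_mul] at hsum
      omega

theorem sum_inter_card (F : CNF) (B : Finset Lit) :
    ∑ C ∈ F, (B ∩ C).card = ∑ u ∈ B, occCount F u := by
  unfold occCount
  simp_rw [Finset.card_filter]
  rw [Finset.sum_comm]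
  refine Finset.sum_congr rfl fun C _ => ?_
  rw [← Finset.card_filter, Finset.filter_mem_eq_inter]

theorem sum_inter_sq {F : CNF} (hw : WeaklyLinear F) (B : Finset Lit) :
    ∑ C ∈ F, (B ∩ C).card * (B ∩ C).card + B.card
      ≤ B.card * B.card + ∑ C ∈ F, (B ∩ C).card := by
  have h1 : (F.biUnion (fun C => (B ∩ C).offDiag)).card ≤ B.offDiag.card := by
    apply Finset.card_le_card
    intro p hp
    simp only [Finset.mem_biUnion, Finset.mem_offDiag, Finset.mem_inter] at hp ⊢
    obtain ⟨C, _, h⟩ := hp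
    exact ⟨h.1.1, h.2.1.1, h.2.2⟩
  rw [Finset.card_biUnion] at h1
  · have h2 : ∀ C ∈ F, (B ∩ C).card * (B ∩ C).card = (B ∩ C).offDiag.card + (B ∩ C).card := by
      intro C _
      rw [Finset.offDiag_card]
      have := Nat.le_mul_self (B ∩ C).card
      omega
    rw [Finset.sum_congr rfl h2, Finset.sum_add_distrib]
    rw [Finset.offDiag_card B] at h1
    have := Nat.le_mul_self B.card
    omega
  · intro C hC D hD hne
    show Disjoint ((B ∩ C).offDiag) ((B ∩ D).offDiag)
    rw [Finset.disjoint_left]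
    rintro ⟨a, b⟩ h h'
    simp only [Finset.mem_offDiag, Finset.mem_inter] at h h'
    have hcard := hw C hC D hD hne
    rw [Finset.card_le_one] at hcard
    exact h.2.2 (hcard a (by simp [h.1.2, h'.1.2]) b (by simp [h.2.1.2, h'.2.1.2]))

/-- The quadratic improvement for weakly linear formulas. -/
theorem card_bound {j d : ℕ} {F : CNF} (hd : GoodOcc j d) (hF : IsKCNF (j + 1) F)
    (hw : WeaklyLinear F) (hu : Unsat F) : (d + 1) * (2 * d + 3) ≤ 3 * F.card := by
  obtain ⟨A, hA, hdef⟩ := exists_deficient hd hF hu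
  have ha : 2 * d + 2 ≤ A.card := by
    have h1 := sum_inter_card F A
    have h2 := sum_inter_sq hw A
    have h3 : ∀ C ∈ F, 3 * (A ∩ C).card
        ≤ (A ∩ C).card * (A ∩ C).card + 2 * (if ∃ u ∈ A, u ∈ C then 1 else 0) := by
      intro C _
      split_ifs with h
      · rcases Nat.lt_or_ge (A ∩ C).card 2 with h' | h'
        · interval_cases (A ∩ C).card <;> omega
        · rcases Nat.lt_or_ge (A ∩ C).card 3 with h'' | h''
          · interval_cases (A ∩ C).card <;> omega
          · nlinarith
      · have : A ∩ C = ∅ := by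
          ext u
          simp only [Finset.mem_inter, Finset.notMem_empty, iff_false]
          exact fun hh => h ⟨u, hh.1, hh.2⟩
        simp [this]
    have h4 := Finset.sum_le_sum h3
    rw [← Finset.mul_sum, Finset.sum_add_distrib, ← Finset.mul_sum, ← Finset.card_filter] at h4
    by_contra hlt
    have : A.card ≤ 2 * d + 1 := by omega
    nlinarith
  obtain ⟨B, hBA, hB⟩ := Finset.exists_subset_card_eq ha
  have h1 := sum_inter_card F B
  have h2 := sum_inter_sq hw B
  have h3 : ∀ C ∈ F, 5 * (B ∩ C).card ≤ (B ∩ C).card * (B ∩ C).card + 6 := by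
    intro C _
    generalize (B ∩ C).card = r
    rcases Nat.lt_or_ge r 3 with h' | h'
    · interval_cases r <;> omega
    · obtain ⟨q, rfl⟩ := Nat.exists_eq_add_of_le h'
      nlinarith
  have h4 := Finset.sum_le_sum h3
  rw [← Finset.mul_sum, Finset.sum_add_distrib, Finset.sum_const, smul_eq_mul] at h4
  have h5 : B.card * (d + 1) ≤ ∑ u ∈ B, occCount F u := by
    rw [← smul_eq_mul, ← Finset.sum_const]
    exact Finset.sum_le_sum fun u hu => hA u (hBA hu)
  rw [hB] at h2 h5
  nlinarith

/-- Truth of a literal under the assignment whose set of true variables is `T`. -/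
def Holds (T : Finset ℕ) (l : Lit) : Prop := decide (l.1 ∈ T) = l.2

/-- All clauses of `S` are true under `T`. -/
def SatT (S : CNF) (T : Finset ℕ) : Prop := ∀ C ∈ S, ∃ l ∈ C, Holds T l

open Classical in
/-- Assignments satisfying `S` and falsifying every literal of `L`. -/
noncomputable def asg (n : ℕ) (S : CNF) (L : Finset Lit) : Finset (Finset ℕ) :=
  (Finset.range n).powerset.filter (fun T => SatT S T ∧ ∀ l ∈ L, ¬ Holds T l)

theorem mem_asg {n : ℕ} {S : CNF} {L : Finset Lit} {T : Finset ℕ} :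
    T ∈ asg n S L ↔ T ⊆ Finset.range n ∧ SatT S T ∧ ∀ l ∈ L, ¬ Holds T l := by
  simp [asg]

theorem holds_flip_self (T : Finset ℕ) (l : Lit) :
    Holds (symmDiff T {l.1}) l ↔ ¬ Holds T l := by
  obtain ⟨x, b⟩ := l
  simp only [Holds, Finset.mem_symmDiff, Finset.mem_singleton]
  by_cases h : x ∈ T <;> cases b <;> simp [h]

theorem holds_flip_other (T : Finset ℕ) {l m : Lit} (h : m.1 ≠ l.1) :
    Holds (symmDiff T {l.1}) m ↔ Holds T m := by
  simp only [Holds, Finset.mem_symmDiff, Finset.mem_singleton, h]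
  simp

/-- `C` and `D` conflict: some literal of `C` occurs negated in `D`. -/
def Conflict (C D : Clause) : Prop := ∃ l ∈ C, (l.1, !l.2) ∈ D

theorem asg_insert_half {n : ℕ} {S : CNF} {L : Finset Lit} {l : Lit} (hn : l.1 < n)
    (hS : ∀ D ∈ S, (l.1, !l.2) ∉ D) (hL : ∀ m ∈ L, m.1 ≠ l.1) :
    2 * (asg n S (insert l L)).card ≤ (asg n S L).card := by
  classical
  have hinj : Function.Injective (fun T : Finset ℕ => symmDiff T {l.1}) :=
    symmDiff_left_injective _
  have hdisj : Disjoint (asg n S (insert l L))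
      ((asg n S (insert l L)).image (fun T => symmDiff T {l.1})) := by
    rw [Finset.disjoint_left]
    intro T hT hT'
    obtain ⟨U, hU, rfl⟩ := Finset.mem_image.mp hT'
    have h1 := (mem_asg.mp hT).2.2 l (by simp)
    have h2 := (mem_asg.mp hU).2.2 l (by simp)
    exact h1 ((holds_flip_self U l).mpr h2)
  have hcard := Finset.card_union_of_disjoint hdisj
  rw [Finset.card_image_of_injective _ hinj, ← two_mul] at hcard
  rw [← hcard]
  apply Finset.card_le_card
  intro T hT
  rcases Finset.mem_union.mp hT with hT | hT
  · obtain ⟨h1, h2, h3⟩ := mem_asg.mp hT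
    exact mem_asg.mpr ⟨h1, h2, fun m hm => h3 m (Finset.mem_insert_of_mem hm)⟩
  · obtain ⟨U, hU, rfl⟩ := Finset.mem_image.mp hT
    obtain ⟨h1, h2, h3⟩ := mem_asg.mp hU
    refine mem_asg.mpr ⟨?_, ?_, ?_⟩
    · intro x hx
      rw [Finset.mem_symmDiff, Finset.mem_singleton] at hx
      rcases hx with hx | hx
      · exact h1 hx.1
      · rw [hx.1]; exact Finset.mem_range.mpr hn
    · intro D hD
      obtain ⟨m, hm, hh⟩ := h2 D hD
      by_cases hml : m.1 = l.1
      · have hb : m.2 = l.2 := by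
          by_contra hb
          apply hS D hD
          have : m = (l.1, !l.2) := by
            refine Prod.ext (by exact hml) ?_
            show m.2 = !l.2
            cases h : m.2 <;> cases h' : l.2 <;> simp_all
          rw [← this]; exact hm
        have : m = l := Prod.ext hml hb
        subst this
        exact ⟨m, hm, (holds_flip_self U m).mpr (h3 m (by simp))⟩
      · exact ⟨m, hm, (holds_flip_other U hml).mpr hh⟩
    · intro m hm hh
      exact h3 m (Finset.mem_insert_of_mem hm) ((holds_flip_other U (hL m hm)).mp hh)

theorem asg_pow {n : ℕ} {S : CNF} (L : Finset Lit) (hn : ∀ l ∈ L, l.1 < n)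
    (hS : ∀ D ∈ S, ¬ Conflict L D) (hv : Clause.valid L) :
    2 ^ L.card * (asg n S L).card ≤ (asg n S ∅).card := by
  classical
  induction L using Finset.induction_on with
  | empty => simp
  | insert l L hl ih =>
    have ih' := ih (fun m hm => hn m (Finset.mem_insert_of_mem hm))
      (fun D hD ⟨m, hm, h⟩ => hS D hD ⟨m, Finset.mem_insert_of_mem hm, h⟩)
      (fun x hx => hv x ⟨Finset.mem_insert_of_mem hx.1, Finset.mem_insert_of_mem hx.2⟩)
    have hh := asg_insert_half (n := n) (S := S) (L := L) (l := l) (hn l (by simp))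
      (fun D hD h => hS D hD ⟨l, by simp, h⟩) (by
        intro m hm hml
        have hne : m ≠ l := fun h => hl (h ▸ hm)
        obtain ⟨x, b⟩ := l
        obtain ⟨y, c⟩ := m
        simp only at hml
        subst hml
        apply hv y
        cases b <;> cases c <;> simp_all)
    rw [Finset.card_insert_of_notMem hl, pow_succ]
    calc _ = 2 ^ L.card * (2 * (asg n S (insert l L)).card) := by ring
      _ ≤ 2 ^ L.card * (asg n S L).card := Nat.mul_le_mul_left _ hh
      _ ≤ _ := ih'

theorem asg_insert_clause (n : ℕ) (S : CNF) (C : Clause) :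
    (asg n (insert C S) ∅).card + (asg n S C).card = (asg n S ∅).card := by
  classical
  rw [← Finset.card_union_of_disjoint]
  · congr 1
    ext T
    simp only [Finset.mem_union, mem_asg, SatT, Finset.mem_insert, forall_eq_or_imp,
      Finset.notMem_empty, false_imp_iff, implies_true, and_true]
    by_cases h : ∃ l ∈ C, Holds T l
    · have h' : ¬ ∀ l ∈ C, ¬ Holds T l := by push Not; exact h
      simp only [h, h', true_and, and_false, or_false]
    · have h' : ∀ l ∈ C, ¬ Holds T l := by push Not at h; exact h
      rw [and_iff_left h']
      constructor
      · rintro (hh | hh)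
        · exact absurd hh.2.1 h
        · exact hh
      · exact fun hh => Or.inr hh
  · rw [Finset.disjoint_left]
    intro T hT hT'
    obtain ⟨l, hl, hh⟩ := (mem_asg.mp hT).2.1 C (by simp)
    exact (mem_asg.mp hT').2.2 l hl hh

theorem asg_mono {n : ℕ} {S S' : CNF} (h : S' ⊆ S) (L : Finset Lit) :
    (asg n S L).card ≤ (asg n S' L).card := by
  apply Finset.card_le_card
  intro T hT
  obtain ⟨h1, h2, h3⟩ := mem_asg.mp hT
  exact mem_asg.mpr ⟨h1, fun C hC => h2 C (h hC), h3⟩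

open Classical in
/-- Lopsided local lemma, main induction. -/
theorem lll_main {j n Δ : ℕ} {F : CNF} {q : ℝ} (hq0 : 0 < q) (hq1 : q < 1)
    (hF : IsKCNF j F) (hn : ∀ C ∈ F, ∀ l ∈ C, l.1 < n)
    (hΔ : ∀ C ∈ F, (F.filter (fun D => Conflict C D)).card ≤ Δ)
    (hq : 1 ≤ 2 ^ j * (q * (1 - q) ^ Δ)) (S : CNF) : S ⊆ F → ∀ C ∈ F,
      ((asg n S C).card : ℝ) ≤ q * (asg n S ∅).card := by
  induction S using Finset.strongInduction with
  | H S ih =>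
    intro hSF C hC
    set S1 := S.filter (fun D => Conflict C D) with hS1
    set S2 := S.filter (fun D => ¬ Conflict C D) with hS2
    have hstep : ∀ R : CNF, R ⊆ S1 →
        (1 - q) ^ R.card * ((asg n S2 ∅).card : ℝ) ≤ (asg n (R ∪ S2) ∅).card := by
      intro R
      induction R using Finset.induction_on with
      | empty => intro _; simp
      | insert D R hD ihR =>
        intro hR
        have hDS1 : D ∈ S1 := hR (Finset.mem_insert_self _ _)
        have hRS1 : R ⊆ S1 := fun x hx => hR (Finset.mem_insert_of_mem hx)
        have h1 := ihR hRS1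
        have hsub : R ∪ S2 ⊂ S := by
          rw [Finset.ssubset_iff_of_subset (Finset.union_subset
            (hRS1.trans (Finset.filter_subset _ _)) (Finset.filter_subset _ _))]
          refine ⟨D, (Finset.mem_filter.mp hDS1).1, ?_⟩
          intro h
          rcases Finset.mem_union.mp h with h | h
          · exact hD h
          · exact (Finset.mem_filter.mp h).2 (Finset.mem_filter.mp hDS1).2
        have h2 := ih _ hsub (hsub.subset.trans hSF) D (hSF (Finset.mem_filter.mp hDS1).1)
        have h3 := asg_insert_clause n (R ∪ S2) D
        have h3' : ((asg n (insert D (R ∪ S2)) ∅).card : ℝ) + (asg n (R ∪ S2) D).card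
          = (asg n (R ∪ S2) ∅).card := by exact_mod_cast h3
        rw [Finset.card_insert_of_notMem hD, Finset.insert_union, pow_succ]
        nlinarith
    have hfull := hstep S1 (Finset.Subset.refl _)
    have hun : S1 ∪ S2 = S := Finset.filter_union_filter_not_eq _ _
    rw [hun] at hfull
    have hcard : S1.card ≤ Δ := le_trans (Finset.card_le_card
      (Finset.filter_subset_filter _ hSF)) (hΔ C hC)
    have hpow : (1 - q) ^ Δ ≤ (1 - q) ^ S1.card :=
      pow_le_pow_of_le_one (by linarith) (by linarith) hcard
    have hind := asg_pow (n := n) (S := S2) C (hn C hC)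
      (fun D hD => (Finset.mem_filter.mp hD).2) (hF C hC).1
    rw [(hF C hC).2] at hind
    have hind' : (2 : ℝ) ^ j * (asg n S2 C).card ≤ (asg n S2 ∅).card := by exact_mod_cast hind
    have hmono : ((asg n S C).card : ℝ) ≤ (asg n S2 C).card := by
      exact_mod_cast asg_mono (Finset.filter_subset _ _) C
    have hqq : 0 < q * (1 - q) ^ Δ := mul_pos hq0 (pow_pos (by linarith) _)
    calc ((asg n S C).card : ℝ) ≤ (asg n S2 C).card := hmono
      _ ≤ (2 ^ j * (q * (1 - q) ^ Δ)) * (asg n S2 C).card :=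
          le_mul_of_one_le_left (by positivity) hq
      _ = (q * (1 - q) ^ Δ) * (2 ^ j * (asg n S2 C).card) := by ring
      _ ≤ (q * (1 - q) ^ Δ) * (asg n S2 ∅).card := by gcongr
      _ = q * ((1 - q) ^ Δ * (asg n S2 ∅).card) := by ring
      _ ≤ q * ((1 - q) ^ S1.card * (asg n S2 ∅).card) := by gcongr
      _ ≤ q * (asg n S ∅).card := by gcongr

/-- Lovasz local lemma bound. -/
theorem goodOcc_lll {j d : ℕ} (hj : 1 ≤ j) (hd1 : 1 ≤ d)
    (h : Real.exp 1 * (j * d + 1) ≤ 2 ^ j) : GoodOcc j d := by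
  classical
  intro F hF hocc
  obtain ⟨n, hn⟩ : ∃ n, ∀ C ∈ F, ∀ l ∈ C, l.1 < n := by
    refine ⟨(F.sup (fun C => C.sup (fun l => l.1))) + 1, ?_⟩
    intro C hC l hl
    have h1 : l.1 ≤ C.sup (fun l => l.1) := Finset.le_sup (f := fun l : Lit => l.1) hl
    have h2 : C.sup (fun l => l.1) ≤ F.sup (fun C => C.sup (fun l => l.1)) :=
      Finset.le_sup (f := fun C : Clause => C.sup (fun l => l.1)) hC
    exact Nat.lt_succ_of_le (h1.trans h2)
  have hΔ : ∀ C ∈ F, (F.filter (fun D => Conflict C D)).card ≤ j * d := by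
    intro C hC
    have hsub : F.filter (fun D => Conflict C D)
        ⊆ C.biUnion (fun l => F.filter (fun D => (l.1, !l.2) ∈ D)) := by
      intro D hD
      obtain ⟨hD, l, hl, hlD⟩ := Finset.mem_filter.mp hD
      exact Finset.mem_biUnion.mpr ⟨l, hl, Finset.mem_filter.mpr ⟨hD, hlD⟩⟩
    refine (Finset.card_le_card hsub).trans ?_
    rw [← (hF C hC).2]
    exact Finset.card_biUnion_le_card_mul _ _ _ (fun l _ => hocc _)
  have hpos : 1 ≤ j * d := Nat.mul_pos hj hd1
  set Δ := j * d with hΔdef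
  have hposR : (1 : ℝ) ≤ Δ := by exact_mod_cast hpos
  have h' : Real.exp 1 * ((Δ : ℝ) + 1) ≤ 2 ^ j := by
    rw [hΔdef]; push_cast; exact h
  set q : ℝ := 1 / ((Δ : ℝ) + 1) with hqdef
  have hq0 : 0 < q := by positivity
  have hq1 : q < 1 := by
    rw [hqdef, div_lt_one (by linarith)]; linarith
  have hexp : 1 ≤ Real.exp 1 * (1 - q) ^ Δ := by
    have h1 : 1 - q = (1 + 1 / (Δ : ℝ))⁻¹ := by
      rw [hqdef]; field_simp; ring
    have h2 : (1 + 1 / (Δ : ℝ)) ^ Δ ≤ Real.exp 1 := by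
      have h3 : 1 + 1 / (Δ : ℝ) ≤ Real.exp (1 / Δ) := by
        have := Real.add_one_le_exp (1 / (Δ : ℝ)); linarith
      calc (1 + 1 / (Δ : ℝ)) ^ Δ ≤ Real.exp (1 / Δ) ^ Δ := by gcongr
        _ = Real.exp 1 := by
          rw [← Real.exp_nat_mul]; congr 1; field_simp
    rw [h1, inv_pow, ← div_eq_mul_inv, one_le_div (by positivity)]
    exact h2
  have hq : 1 ≤ 2 ^ j * (q * (1 - q) ^ Δ) := by
    have hp : 0 ≤ q * (1 - q) ^ Δ := mul_nonneg hq0.le (pow_nonneg (by linarith) _)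
    calc (1 : ℝ) ≤ Real.exp 1 * (1 - q) ^ Δ := hexp
      _ = (Real.exp 1 * ((Δ : ℝ) + 1)) * (q * (1 - q) ^ Δ) := by
        rw [hqdef]; field_simp
      _ ≤ _ := by gcongr
  have hmain := lll_main (n := n) hq0 hq1 hF hn hΔ hq
  have hall : ∀ S : CNF, S ⊆ F → 0 < (asg n S ∅).card := by
    intro S
    induction S using Finset.induction_on with
    | empty =>
      intro _
      exact Finset.card_pos.mpr ⟨∅, mem_asg.mpr ⟨by simp, by intro C hC; simp at hC, by simp⟩⟩
    | insert D R hD ih =>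
      intro hR
      have hRF : R ⊆ F := fun x hx => hR (Finset.mem_insert_of_mem hx)
      have h1 := ih hRF
      have h2 := hmain R hRF D (hR (Finset.mem_insert_self _ _))
      have h3 := asg_insert_clause n R D
      have h1' : (0 : ℝ) < (asg n R ∅).card := by exact_mod_cast h1
      have h4 : ((asg n R D).card : ℝ) < (asg n R ∅).card := by nlinarith
      have h5 : (asg n R D).card < (asg n R ∅).card := by exact_mod_cast h4
      omega
  obtain ⟨T, hT⟩ := Finset.card_pos.mp (hall F (Finset.Subset.refl _))
  exact ⟨fun x => decide (x ∈ T), (mem_asg.mp hT).2.1⟩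

/-- Every unsatisfiable weakly linear `k`-CNF formula (`k ≥ 1`) has more than
`C(focc(k-1)+2, 2)` clauses; in particular every weakly linear `k`-CNF formula
(`k ≥ 2`) with at most `4^k/(8e²(k-1)²)` clauses is satisfiable. -/
theorem stmt8 :
    (∀ (k : ℕ) (F : CNF), 1 ≤ k → IsKCNF k F → WeaklyLinear F → Unsat F →
      (focc (k - 1) + 2).choose 2 < F.card) ∧
    (∀ (k : ℕ) (F : CNF), 2 ≤ k → IsKCNF k F → WeaklyLinear F →
      (F.card : ℝ) ≤ 4 ^ k / (8 * Real.exp 1 ^ 2 * ((k : ℝ) - 1) ^ 2) →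
      ∃ α, Satisfies α F) := by
  constructor
  · intro k F hk hF hw hu
    obtain ⟨j, rfl⟩ : ∃ j, k = j + 1 := ⟨k - 1, by omega⟩
    rw [Nat.add_sub_cancel]
    have h2 := two_le_card hk hF hu
    by_cases h0 : focc j = 0
    · rw [h0]; simpa using h2
    · have hj : 1 ≤ j := by
        rcases Nat.eq_zero_or_pos j with rfl | h
        · exact absurd focc_zero h0
        · exact h
      have hb := card_bound (goodOcc_focc hj) hF hw hu
      generalize focc j = d at *
      rw [Nat.choose_two_right, Nat.div_lt_iff_lt_mul (by norm_num)]
      have : 1 ≤ d := by omega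
      show (d + 2) * (d + 1) < _
      nlinarith
  · intro k F hk hF hw hc
    obtain ⟨j, rfl⟩ : ∃ j, k = j + 1 := ⟨k - 1, by omega⟩
    have hj : 1 ≤ j := by omega
    by_contra hu
    have h2 := two_le_card (by omega) hF hu
    have he : 2 < Real.exp 1 := by have := Real.exp_one_gt_d9; linarith
    have hjR : (1 : ℝ) ≤ j := by exact_mod_cast hj
    set x : ℝ := 2 ^ j / (Real.exp 1 * j) with hx
    have hx0 : 0 < x := by positivity
    have hc' : (F.card : ℝ) ≤ x ^ 2 / 2 := by
      refine hc.trans (le_of_eq ?_)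
      rw [hx]
      push_cast
      rw [add_sub_cancel_right]
      have : (4 : ℝ) ^ (j + 1) = 4 * (2 ^ j) ^ 2 := by
        rw [pow_succ, ← pow_mul, mul_comm j 2, pow_mul]; norm_num; ring
      rw [this]
      field_simp
      ring
    have h2' : (2 : ℝ) ≤ F.card := by exact_mod_cast h2
    have hx2 : 2 ≤ x := by nlinarith
    have hxe : Real.exp 1 * j * x = 2 ^ j := by rw [hx]; field_simp
    have hj2 : 2 ≤ j := by
      by_contra hlt
      have : j = 1 := by omega
      subst this
      norm_num at hxe
      nlinarith
    have hj2R : (2 : ℝ) ≤ j := by exact_mod_cast hj2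
    have hinv : 1 / (j : ℝ) ≤ 1 / 2 := by gcongr
    set y : ℝ := x - 1 / j with hy
    have hd1 : 1 ≤ ⌊y⌋₊ := by
      rw [Nat.le_floor_iff' (by norm_num)]; push_cast; linarith
    have hdle : (⌊y⌋₊ : ℝ) ≤ y := Nat.floor_le (by linarith)
    have hdlt : y < ⌊y⌋₊ + 1 := Nat.lt_floor_add_one y
    have hgood : GoodOcc j ⌊y⌋₊ := by
      apply goodOcc_lll hj hd1
      rw [← hxe, mul_assoc]
      have : (j : ℝ) * y = j * x - 1 := by rw [hy]; field_simp
      have : (j : ℝ) * ⌊y⌋₊ ≤ j * y := by gcongr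
      gcongr
      linarith
    have hb := card_bound hgood hF hw hu
    have hbR : ((⌊y⌋₊ : ℝ) + 1) * (2 * ⌊y⌋₊ + 3) ≤ 3 * F.card := by exact_mod_cast hb
    have h3 : x - 1 / 2 < (⌊y⌋₊ : ℝ) + 1 := by linarith
    have h4 : 2 * x < 2 * (⌊y⌋₊ : ℝ) + 3 := by linarith
    have h5 : (x - 1 / 2) * (2 * x) < ((⌊y⌋₊ : ℝ) + 1) * (2 * ⌊y⌋₊ + 3) := by
      apply mul_lt_mul'' h3 h4 <;> linarith
    nlinarith
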